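/- For every ε > 0 there is a constant C_ε > 0 such that for every integer y ≥ 1 there is N₀ with: for all integers N > N₀, all b with gcd(b,y) = 1, every real Q with 1 ≤ Q ≤ N^{1/10}, and every finite set F ⊂ [0,N] ∩ ℤ, one has ‖ Hi_{N,y,Q} ∗ 1_F ‖_{ℓ²(ℤ)} ≤ C_ε · Q^{−1+ε} · |F|^{1/2}. -/

import Mathlib

open scoped ENNReal

noncomputable section

/-- `e(t) = e^{2πit}`. -/
def e2pi (t : ℝ) : ℂ := Complex.exp (2 * Real.pi * Complex.I * t)

/-- For real `x > 0`, `M̂_x(θ) = (1/x) Σ_{0 ≤ n < x} e(-nθ)`. -/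
def Mhat (x θ : ℝ) : ℂ :=
  ((1 / x : ℝ) : ℂ) * ∑ n ∈ Finset.range ⌈x⌉₊, e2pi (-(n * θ))

/-- The Gauss-type sum `Υ(a,q)`. -/
def Ups (y : ℕ) (b : ℤ) (a : ℤ) (q : ℕ) : ℂ :=
  ((Nat.totient y : ℂ) / (Nat.totient (Nat.lcm y q) : ℂ)) *
    ∑ r ∈ (Finset.Icc 1 q).filter
        (fun r : ℕ => Nat.gcd r q = 1 ∧
          (r : ℤ) % (Nat.gcd y q : ℤ) = b % (Nat.gcd y q : ℤ)),
      e2pi (-((((r : ℤ) * a : ℤ) : ℝ) / (q : ℝ)))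

/-- The Ramanujan height `h_y(q)` of `q` relative to `y`. -/
def hgt (y q : ℕ) : ℕ :=
  if 1 < Nat.gcd y q ∧ Nat.gcd y q < q ∧ 1 < Nat.gcd (Nat.gcd y q) (q / Nat.gcd y q) then 0
  else Nat.lcm y q / y

/-- The multiplier piece `L̂^{a,q}_{N,y}(ξ) = Υ(a,q) M̂_{N/ℓ}(ℓ(ξ-a/q)) χ(ℓ²(ξ-a/q))`. -/
def Lhat (χ : ℝ → ℝ) (y : ℕ) (b : ℤ) (N : ℝ) (a q : ℕ) (ξ : ℝ) : ℂ :=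
  Ups y b (a : ℤ) q *
    Mhat (N / (Nat.lcm y q : ℝ)) ((Nat.lcm y q : ℝ) * (ξ - (a : ℝ) / (q : ℝ))) *
    ((χ ((Nat.lcm y q : ℝ) ^ 2 * (ξ - (a : ℝ) / (q : ℝ))) : ℝ) : ℂ)

/-- The kernel `L^{a,q}_{N,y}(x) = ∫₀¹ L̂^{a,q}_{N,y}(ξ) e(xξ) dξ`. -/
def Lker (χ : ℝ → ℝ) (y : ℕ) (b : ℤ) (N : ℝ) (a q : ℕ) (x : ℤ) : ℂ :=
  ∫ ξ in (0:ℝ)..1, Lhat χ y b N a q ξ * e2pi ((x : ℝ) * ξ)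

/-- The High kernel `Hi_{N,y,Q} = Σ_{q : Q ≤ h_y(q) ≤ N^{1/10}} Σ_{a ∈ A_q} L^{a,q}_{N,y}`. -/
def HiK (χ : ℝ → ℝ) (y : ℕ) (b : ℤ) (N : ℕ) (Q : ℝ) (x : ℤ) : ℂ :=
  ∑ q ∈ (Finset.Icc 1 (y * ⌈(N : ℝ) ^ ((1:ℝ)/10)⌉₊)).filter
      (fun q : ℕ => Q ≤ (hgt y q : ℝ) ∧ (hgt y q : ℝ) ≤ (N : ℝ) ^ ((1:ℝ)/10)),
    ∑ a ∈ (Finset.Icc 1 q).filter (fun a : ℕ => Nat.gcd a q = 1),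
      Lker χ y b (N : ℝ) a q x

/-- `(Hi_{N,y,Q} ∗ 1_F)(x)`. -/
def HiConv (χ : ℝ → ℝ) (y : ℕ) (b : ℤ) (N : ℕ) (Q : ℝ) (F : Finset ℤ) (x : ℤ) : ℂ :=
  ∑ z ∈ F, HiK χ y b N Q (x - z)

/-!
By Plancherel, convolution with the High kernel is bounded on `ℓ²` by the supremum of its Fourier
multiplier, a sum of bumps centred at reduced fractions `a/q`.

Let `h = h_y(q) ≠ 0` and `ℓ = lcm(y, q) = y h`. The Chinese remainder theorem writes the reduced
residues mod `q` in a fixed class mod `gcd(y, q)` so that the exponential sum in `Υ(a, q)` becomes a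
unimodular multiple of the sum of the primitive `h`-th roots of unity; hence
`|Υ(a, q)| = |μ(h)| / φ(h) ≪ h ^ (-1 + ε)`.

Distinct reduced fractions satisfy `|a/q - a'/q'| ≥ 1 / (ℓ ℓ')`, while the bumps have width
`ℓ⁻² / 4`. So the bumps that meet at a given `ξ` have heights growing at least by a factor `3`, and
the sum of `h ^ (-1 + ε)` over heights `h ≥ Q` is geometric, of size `≪ Q ^ (-1 + ε)`.
-/

theorem e2pi_eq_fourierChar (t : ℝ) : e2pi t = Real.fourierChar t := by
  rw [e2pi, Real.fourierChar_apply]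
  push_cast
  ring_nf

theorem norm_e2pi (t : ℝ) : ‖e2pi t‖ = 1 := by
  rw [e2pi_eq_fourierChar, Circle.norm_coe]

theorem e2pi_add (s t : ℝ) : e2pi (s + t) = e2pi s * e2pi t := by
  simp only [e2pi_eq_fourierChar, AddChar.map_add_eq_mul, Circle.coe_mul]

theorem e2pi_natCast_mul (n : ℕ) (t : ℝ) : e2pi (n * t) = e2pi t ^ n := by
  simp only [e2pi_eq_fourierChar, ← nsmul_eq_mul, AddChar.map_nsmul_eq_pow, Circle.coe_pow]

@[fun_prop]
theorem continuous_e2pi : Continuous e2pi := by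
  unfold e2pi
  fun_prop

theorem isPrimitiveRoot_e2pi_div {a : ℤ} {q : ℕ} (hq : q ≠ 0) (haq : IsCoprime a q) :
    IsPrimitiveRoot (e2pi (a / q)) q := by
  simpa only [e2pi, Complex.ofReal_div, Complex.ofReal_intCast, Complex.ofReal_natCast] using
    Complex.isPrimitiveRoot_exp_of_isCoprime a q hq haq

section PrimitiveRoots

variable {R : Type*} [CommRing R] [IsDomain R]

theorem sum_nthRootsFinset_one {n : ℕ} {ζ : R} (hζ : IsPrimitiveRoot ζ n) :
    ∑ η ∈ Polynomial.nthRootsFinset n (1 : R), η = if n = 1 then 1 else 0 := by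
  classical
  have hroots : (Polynomial.nthRootsFinset n (1 : R)).val = (Multiset.range n).map (ζ ^ ·) := by
    rw [Polynomial.nthRootsFinset_def, Multiset.toFinset_val,
      Multiset.dedup_eq_self.2 hζ.nthRoots_one_nodup, hζ.nthRoots_eq (one_pow n)]
    simp only [mul_one]
  rw [Finset.sum_eq_multiset_sum, hroots, Multiset.map_map]
  change ∑ i ∈ Finset.range n, ζ ^ i = _
  split_ifs with hn
  · simp [hn]
  · obtain rfl | hn0 := Nat.eq_zero_or_pos n
    · simp
    · exact hζ.geom_sum_eq_zero (by lia)

theorem sum_primitiveRoots_eq_moebius {n : ℕ} {ζ : R} (hζ : IsPrimitiveRoot ζ n) :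
    ∑ η ∈ primitiveRoots n R, η = (ArithmeticFunction.moebius n : R) := by
  obtain rfl | hn := Nat.eq_zero_or_pos n
  · simp
  have hdivisors : ∀ m > 0, m ∈ {d | d ∣ n} →
      ∑ d ∈ m.divisors, ∑ η ∈ primitiveRoots d R, η = if m = 1 then 1 else 0 := by
    classical
    rintro m hm ⟨d, rfl⟩
    have : NeZero m := ⟨hm.ne'⟩
    rw [← sum_nthRootsFinset_one (hζ.pow hn (mul_comm m d)),
      IsPrimitiveRoot.nthRoots_one_eq_biUnion_primitiveRoots,
      Finset.sum_biUnion fun _ _ _ _ hij => IsPrimitiveRoot.disjoint hij]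
  rw [← (ArithmeticFunction.sum_eq_iff_sum_mul_moebius_eq_on _
    fun _ _ hmn hn' => hmn.trans hn').1 hdivisors n hn dvd_rfl,
    Finset.sum_eq_single_of_mem (n, 1) (by simp [hn.ne'])]
  · simp only [if_true, mul_one]
  · rintro ⟨i, j⟩ hij hne
    have hj : j ≠ 1 := by
      rintro rfl
      simp_all
    simp only [hj, if_false, mul_zero]

end PrimitiveRoots

section ResidueClass

theorem exists_mem_Icc_modEq {q : ℕ} (hq : 0 < q) (z : ℤ) :
    ∃ r ∈ Finset.Icc 1 q, (r : ℤ) ≡ z [ZMOD q] := by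
  have hq' : (0 : ℤ) < q := by exact_mod_cast hq
  obtain ⟨hpos, hle⟩ := toIocMod_mem_Ioc hq' 0 z
  obtain ⟨r, hr⟩ := Int.eq_ofNat_of_zero_le hpos.le
  refine ⟨r, Finset.mem_Icc.2 (by lia), (Int.modEq_iff_dvd.2 ⟨toIocDiv hq' 0 z, ?_⟩)⟩
  rw [← hr, self_sub_toIocMod, smul_eq_mul, mul_comm]

theorem isCoprime_of_modEq {m a b : ℤ} (hb : IsCoprime b m) (h : a ≡ b [ZMOD m]) :
    IsCoprime a m := by
  obtain ⟨c, hc⟩ := h.symm.dvd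
  rw [sub_eq_iff_eq_add'.1 hc]
  exact hb.add_mul_left_left c

variable {K : Type*} [Field K] {g k : ℕ} {u : K}

theorem isPrimitiveRoot_zpow_sub (hgk : 0 < g * k) (hu : IsPrimitiveRoot u (g * k)) {r B : ℤ}
    (hr : IsCoprime r k) (hrB : r ≡ B [ZMOD g]) (hB : B ≡ 0 [ZMOD k]) :
    IsPrimitiveRoot (u ^ (r - B)) k := by
  obtain ⟨c, hc⟩ := hrB.symm.dvd
  have hgc : IsCoprime ((g : ℤ) * c) k := by
    refine isCoprime_of_modEq hr ?_
    simpa only [← hc, sub_zero] using (Int.ModEq.refl r).sub hB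
  rw [hc, zpow_mul, zpow_natCast]
  exact (hu.pow hgk rfl).zpow_of_gcd_eq_one c
    (Int.isCoprime_iff_gcd_eq_one.1 hgc.of_mul_left_right)

theorem exists_residue_zpow_sub_eq (hgk : 0 < g * k) (hcop : g.Coprime k)
    (hu : IsPrimitiveRoot u (g * k)) {B : ℤ} (hBg : IsCoprime B g) (hB : B ≡ 0 [ZMOD k])
    {ζ : K} (hζ : IsPrimitiveRoot ζ k) :
    ∃ r ∈ Finset.Icc 1 (g * k), Nat.Coprime r (g * k) ∧ r ≡ B [ZMOD g] ∧
      u ^ ((r : ℤ) - B) = ζ := by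
  have : NeZero k := ⟨(Nat.pos_of_mul_pos_left hgk).ne'⟩
  obtain ⟨i, -, hik, rfl⟩ := (hu.pow hgk rfl).isPrimitiveRoot_iff.1 hζ
  obtain ⟨r, hr, hrB⟩ := exists_mem_Icc_modEq hgk (B + g * i)
  have hrg : r ≡ B [ZMOD g] := by
    simpa [Int.ModEq] using (hrB.of_dvd (by exact_mod_cast dvd_mul_right g k) : _ ≡ _ [ZMOD g])
  have hrk : r ≡ g * i [ZMOD k] := by
    simpa only [zero_add] using
      (hrB.of_dvd (by exact_mod_cast dvd_mul_left k g)).trans (hB.add_right (g * i))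
  have hrcop_g : r.Coprime g := Nat.isCoprime_iff_coprime.1 (isCoprime_of_modEq hBg hrg)
  have hrcop_k : r.Coprime k := Nat.isCoprime_iff_coprime.1
    (isCoprime_of_modEq (by exact_mod_cast (hcop.mul_left hik).isCoprime) hrk)
  refine ⟨r, hr, hrcop_g.mul_right hrcop_k, hrg, ?_⟩
  obtain ⟨c, hc⟩ := hrB.symm.dvd
  have hexp : (r : ℤ) - B = (g * k : ℕ) * c + (g * i : ℕ) := by
    push_cast at hc ⊢
    linarith
  rw [hexp, zpow_add₀ (hu.ne_zero hgk.ne'), zpow_mul, hu.zpow_eq_one, one_zpow, one_mul,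
    zpow_natCast, pow_mul]

theorem sum_pow_residue_class (hgk : 0 < g * k) (hcop : g.Coprime k)
    (hu : IsPrimitiveRoot u (g * k)) {B : ℤ} (hBg : IsCoprime B g) (hB : B ≡ 0 [ZMOD k]) :
    ∑ r ∈ (Finset.Icc 1 (g * k)).filter
        (fun r : ℕ => Nat.gcd r (g * k) = 1 ∧ (r : ℤ) % g = B % g), u ^ r =
      u ^ B * ArithmeticFunction.moebius k := by
  have hk : 0 < k := Nat.pos_of_mul_pos_left hgk
  have hu0 : u ≠ 0 := hu.ne_zero hgk.ne'
  rw [← sum_primitiveRoots_eq_moebius (hu.pow hgk rfl), Finset.mul_sum]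
  refine Finset.sum_bij (fun r _ => u ^ ((r : ℤ) - B)) ?maps ?injective ?surjective ?values
  case maps =>
    intro r hr
    obtain ⟨-, hrq, hrB⟩ := Finset.mem_filter.1 hr
    exact (mem_primitiveRoots hk).2 (isPrimitiveRoot_zpow_sub hgk hu
      (Nat.Coprime.coprime_mul_left_right hrq).isCoprime hrB hB)
  case injective =>
    intro r hr s hs hrs
    obtain ⟨hr1, hrq⟩ := Finset.mem_Icc.1 (Finset.mem_filter.1 hr).1
    obtain ⟨hs1, hsq⟩ := Finset.mem_Icc.1 (Finset.mem_filter.1 hs).1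
    have hdvd : ((g * k : ℕ) : ℤ) ∣ s - r := by
      rw [← hu.zpow_eq_one_iff_dvd, ← sub_sub_sub_cancel_right _ _ B, zpow_sub₀ hu0, ← hrs,
        div_self (zpow_ne_zero _ hu0)]
    exact Nat.ModEq.eq_of_abs_lt (Nat.modEq_iff_dvd.2 hdvd) (abs_lt.2 (by lia))
  case surjective =>
    intro ζ hζ
    obtain ⟨r, hr, hrcop, hrB, hrζ⟩ :=
      exists_residue_zpow_sub_eq hgk hcop hu hBg hB ((mem_primitiveRoots hk).1 hζ)
    exact ⟨r, Finset.mem_filter.2 ⟨hr, hrcop, hrB⟩, hrζ⟩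
  case values =>
    intro r _
    rw [← zpow_add₀ hu0, add_sub_cancel, zpow_natCast]

theorem exists_sum_pow_residue_class_eq_mul_moebius (hgk : 0 < g * k) (hcop : g.Coprime k)
    (hu : IsPrimitiveRoot u (g * k)) {b : ℤ} (hb : IsCoprime b g) :
    ∃ ω : K, ω ^ g = 1 ∧ ∑ r ∈ (Finset.Icc 1 (g * k)).filter
        (fun r : ℕ => Nat.gcd r (g * k) = 1 ∧ (r : ℤ) % g = b % g), u ^ r =
      ω * ArithmeticFunction.moebius k := by
  obtain ⟨s, t, hst⟩ := hcop.isCoprime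
  have hbB : b * (t * k) ≡ b [ZMOD g] :=
    Int.modEq_iff_dvd.2 ⟨b * s, by linear_combination (-b) * hst⟩
  have hsum := sum_pow_residue_class hgk hcop hu (isCoprime_of_modEq hb hbB)
    (Int.modEq_zero_iff_dvd.2 ⟨b * t, by ring⟩)
  rw [hbB] at hsum
  refine ⟨_, ?_, hsum⟩
  rw [← zpow_natCast, ← zpow_mul, hu.zpow_eq_one_iff_dvd]
  exact ⟨b * t, by push_cast; ring⟩

end ResidueClass

section Height

variable {y q : ℕ}

theorem left_pos_of_hgt_ne_zero (h : hgt y q ≠ 0) : 0 < y :=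
  Nat.pos_of_ne_zero (by rintro rfl; simp [hgt] at h)

theorem right_pos_of_hgt_ne_zero (h : hgt y q ≠ 0) : 0 < q :=
  Nat.pos_of_ne_zero (by rintro rfl; simp [hgt] at h)

theorem hgt_eq_div_gcd (h : hgt y q ≠ 0) : hgt y q = q / Nat.gcd y q := by
  have hy := left_pos_of_hgt_ne_zero h
  unfold hgt at h ⊢
  split_ifs at h ⊢
  · exact absurd rfl h
  · rw [Nat.lcm_eq_mul_div, Nat.mul_div_assoc _ (Nat.gcd_dvd_right y q),
      Nat.mul_div_cancel_left _ hy]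

theorem gcd_mul_hgt (h : hgt y q ≠ 0) : Nat.gcd y q * hgt y q = q := by
  rw [hgt_eq_div_gcd h, Nat.mul_div_cancel' (Nat.gcd_dvd_right y q)]

theorem mul_hgt (h : hgt y q ≠ 0) : y * hgt y q = Nat.lcm y q := by
  rw [hgt_eq_div_gcd h, ← Nat.mul_div_assoc _ (Nat.gcd_dvd_right y q), Nat.lcm_eq_mul_div]

theorem coprime_gcd_hgt (h : hgt y q ≠ 0) : Nat.Coprime (Nat.gcd y q) (hgt y q) := by
  have hg : 0 < Nat.gcd y q := Nat.gcd_pos_of_pos_right y (right_pos_of_hgt_ne_zero h)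
  by_contra hcop
  have hlt : 1 < Nat.gcd (Nat.gcd y q) (hgt y q) :=
    lt_of_le_of_ne (Nat.gcd_pos_of_pos_left _ hg) (Ne.symm hcop)
  refine h (if_pos ⟨hlt.trans_le (Nat.gcd_le_left _ hg), ?_, hgt_eq_div_gcd h ▸ hlt⟩)
  calc Nat.gcd y q < Nat.gcd y q * hgt y q := (Nat.lt_mul_iff_one_lt_right hg).2
        (hlt.trans_le (Nat.gcd_le_right _ (Nat.pos_of_ne_zero h)))
    _ = q := gcd_mul_hgt h

theorem coprime_hgt (h : hgt y q ≠ 0) : Nat.Coprime y (hgt y q) := by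
  have hdiv : Nat.Coprime (y / Nat.gcd y q) (hgt y q) := by
    rw [hgt_eq_div_gcd h]
    exact Nat.coprime_div_gcd_div_gcd (Nat.gcd_pos_of_pos_right y (right_pos_of_hgt_ne_zero h))
  simpa only [Nat.mul_div_cancel' (Nat.gcd_dvd_left y q)] using (coprime_gcd_hgt h).mul_left hdiv

theorem totient_div_totient_lcm (h : hgt y q ≠ 0) :
    (Nat.totient y : ℝ) / Nat.totient (Nat.lcm y q) = (Nat.totient (hgt y q) : ℝ)⁻¹ := by
  have hy : (Nat.totient y : ℝ) ≠ 0 := by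
    exact_mod_cast (Nat.totient_pos.2 (left_pos_of_hgt_ne_zero h)).ne'
  rw [← mul_hgt h, Nat.totient_mul (coprime_hgt h), Nat.cast_mul, div_mul_cancel_left₀ hy]

theorem norm_Ups {a b : ℤ} (ha : IsCoprime a q) (hb : IsCoprime b y) (h : hgt y q ≠ 0) :
    ‖Ups y b a q‖ = |(ArithmeticFunction.moebius (hgt y q) : ℝ)| / Nat.totient (hgt y q) := by
  have hq := right_pos_of_hgt_ne_zero h
  have hqg := gcd_mul_hgt h
  have hg : Nat.gcd y q ≠ 0 := (Nat.gcd_pos_of_pos_right y hq).ne'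
  have hu : IsPrimitiveRoot (e2pi ((-a : ℤ) / q)) (Nat.gcd y q * hgt y q) :=
    hqg.symm ▸ isPrimitiveRoot_e2pi_div hq.ne' ha.neg_left
  have hbg : IsCoprime b (Nat.gcd y q : ℤ) :=
    hb.of_isCoprime_of_dvd_right (Int.natCast_dvd_natCast.2 (Nat.gcd_dvd_left y q))
  obtain ⟨ω, hω, hsum⟩ := exists_sum_pow_residue_class_eq_mul_moebius
    (hqg.symm ▸ hq) (coprime_gcd_hgt h) hu hbg
  have hterm (r : ℕ) : e2pi (-((((r : ℤ) * a : ℤ) : ℝ) / (q : ℝ))) = e2pi ((-a : ℤ) / q) ^ r := by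
    rw [← e2pi_natCast_mul]
    push_cast
    ring_nf
  rw [hqg] at hsum
  simp only [Ups, hterm, hsum, norm_mul, norm_div, Complex.norm_natCast, Complex.norm_intCast,
    Complex.norm_eq_one_of_pow_eq_one hω hg, one_mul, totient_div_totient_lcm h]
  rw [inv_mul_eq_div]

theorem norm_Ups_le {a b : ℤ} (ha : IsCoprime a q) (hb : IsCoprime b y) (h : hgt y q ≠ 0) :
    ‖Ups y b a q‖ ≤ (Nat.totient (hgt y q) : ℝ)⁻¹ := by
  rw [norm_Ups ha hb h, ← one_div]
  gcongr
  exact_mod_cast ArithmeticFunction.abs_moebius_le_one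

end Height

section Totient

theorem cast_totient_eq_mul_prod (n : ℕ) :
    (Nat.totient n : ℝ) = n * ∏ p ∈ n.primeFactors, (1 - (p : ℝ)⁻¹) := by
  simpa using congrArg (Rat.cast : ℚ → ℝ) (Nat.totient_eq_mul_prod_factors n)

theorem one_le_rpow_mul_one_sub_inv {ε p P : ℝ} (hε : 0 < ε) (hP : 2 ^ (1 / ε) ≤ P) (hp : 2 ≤ p) :
    1 ≤ (if p < P then 2 else 1) * p ^ ε * (1 - p⁻¹) := by
  have hhalf : 1 / 2 ≤ 1 - p⁻¹ := by linarith [inv_anti₀ two_pos hp]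
  have htwo : 2 ≤ (if p < P then 2 else 1) * p ^ ε := by
    split_ifs with hpP
    · linarith [Real.one_le_rpow (one_le_two.trans hp) hε.le]
    · calc (2 : ℝ) = (2 ^ (1 / ε)) ^ ε := by
            rw [← Real.rpow_mul zero_le_two, one_div_mul_cancel hε.ne', Real.rpow_one]
        _ ≤ p ^ ε := Real.rpow_le_rpow (by positivity) (hP.trans (not_lt.1 hpP)) hε.le
        _ = 1 * p ^ ε := (one_mul _).symm
  calc (1 : ℝ) = 2 * (1 / 2) := by norm_num
    _ ≤ _ := by gcongr

theorem prod_rpow_primeFactors_le {ε : ℝ} (hε : 0 ≤ ε) {n : ℕ} (hn : 0 < n) :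
    ∏ p ∈ n.primeFactors, (p : ℝ) ^ ε ≤ (n : ℝ) ^ ε := by
  rw [Real.finsetProd_rpow _ _ fun _ _ => by positivity, ← Nat.cast_prod]
  exact Real.rpow_le_rpow (by positivity)
    (Nat.cast_le.2 (Nat.le_of_dvd hn (Nat.prod_primeFactors_dvd n))) hε

theorem prod_ite_lt_two_le (s : Finset ℕ) (P : ℕ) :
    ∏ p ∈ s, (if (p : ℝ) < P then (2 : ℝ) else 1) ≤ 2 ^ P := by
  simp only [Nat.cast_lt, Finset.prod_ite, Finset.prod_const, one_pow, mul_one]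
  refine pow_le_pow_right₀ one_le_two ?_
  calc (s.filter (· < P)).card ≤ (Finset.range P).card := Finset.card_le_card fun p hp =>
        Finset.mem_range.2 (Finset.mem_filter.1 hp).2
    _ = P := Finset.card_range P

/- Each prime factor `p` of `n` contributes `1 - 1/p ≥ 1/2` to `φ(n)/n`, which `p ^ ε` compensates
unless `p` is one of the finitely many primes below `2 ^ (1 / ε)`. -/
theorem exists_rpow_le_mul_totient {ε : ℝ} (hε : 0 < ε) :
    ∃ C : ℝ, 0 < C ∧ ∀ n : ℕ, 0 < n → (n : ℝ) ^ (1 - ε) ≤ C * Nat.totient n := by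
  obtain ⟨P, hP⟩ := exists_nat_ge ((2 : ℝ) ^ (1 / ε))
  refine ⟨2 ^ P, by positivity, fun n hn => ?_⟩
  have htwo_le : ∀ p ∈ n.primeFactors, (2 : ℝ) ≤ p := fun p hp => by
    exact_mod_cast (Nat.prime_of_mem_primeFactors hp).two_le
  have hprod_nonneg : 0 ≤ ∏ p ∈ n.primeFactors, (1 - (p : ℝ)⁻¹) :=
    Finset.prod_nonneg fun p hp =>
      sub_nonneg.2 (inv_le_one_of_one_le₀ (one_le_two.trans (htwo_le p hp)))
  have hone : 1 ≤ 2 ^ P * (n : ℝ) ^ ε * ∏ p ∈ n.primeFactors, (1 - (p : ℝ)⁻¹) := by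
    calc (1 : ℝ) ≤ ∏ p ∈ n.primeFactors, ((if (p : ℝ) < P then 2 else 1) * (p : ℝ) ^ ε *
            (1 - (p : ℝ)⁻¹)) :=
          Finset.one_le_prod fun p hp => one_le_rpow_mul_one_sub_inv hε hP (htwo_le p hp)
      _ ≤ _ := by
          rw [Finset.prod_mul_distrib, Finset.prod_mul_distrib]
          gcongr
          · exact prod_ite_lt_two_le _ _
          · exact prod_rpow_primeFactors_le hε.le hn
  calc (n : ℝ) ^ (1 - ε)
      ≤ (n : ℝ) ^ (1 - ε) * (2 ^ P * (n : ℝ) ^ ε * ∏ p ∈ n.primeFactors, (1 - (p : ℝ)⁻¹)) :=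
        le_mul_of_one_le_right (by positivity) hone
    _ = 2 ^ P * ((n : ℝ) ^ (1 - ε + ε) * ∏ p ∈ n.primeFactors, (1 - (p : ℝ)⁻¹)) := by
        rw [Real.rpow_add (by exact_mod_cast hn)]
        ring
    _ = 2 ^ P * Nat.totient n := by rw [sub_add_cancel, Real.rpow_one, cast_totient_eq_mul_prod]

theorem exists_inv_totient_le_mul_rpow {ε : ℝ} (hε : 0 < ε) :
    ∃ C : ℝ, 0 < C ∧ ∀ n : ℕ, 0 < n → (Nat.totient n : ℝ)⁻¹ ≤ C * (n : ℝ) ^ (-(1 - ε)) := by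
  obtain ⟨C, hC, htotient⟩ := exists_rpow_le_mul_totient hε
  refine ⟨C, hC, fun n hn => ?_⟩
  have hn0 : (0 : ℝ) < n := by exact_mod_cast hn
  have htot : (0 : ℝ) < Nat.totient n := by exact_mod_cast Nat.totient_pos.2 hn
  rw [Real.rpow_neg hn0.le, ← div_eq_mul_inv, le_div_iff₀ (by positivity), inv_mul_le_iff₀ htot,
    mul_comm]
  exact htotient n hn

end Totient

section Lhat

variable {χ : ℝ → ℝ}

theorem norm_Mhat_le_two {x : ℝ} (hx : 1 ≤ x) (θ : ℝ) : ‖Mhat x θ‖ ≤ 2 := by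
  have hx0 : 0 < x := one_pos.trans_le hx
  have hsum : ‖∑ n ∈ Finset.range ⌈x⌉₊, e2pi (-(n * θ))‖ ≤ x + 1 := by
    refine (norm_sum_le _ _).trans ?_
    simp only [norm_e2pi, Finset.sum_const, Finset.card_range, nsmul_eq_mul, mul_one]
    exact (Nat.ceil_lt_add_one hx0.le).le
  rw [Mhat, norm_mul, Complex.norm_real, Real.norm_of_nonneg (by positivity)]
  calc 1 / x * _ ≤ 1 / x * (x + 1) := by gcongr
    _ ≤ 2 := by
      rw [one_div_mul_eq_div, div_le_iff₀ hx0]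
      linarith

@[fun_prop]
theorem continuous_Mhat (x : ℝ) : Continuous (Mhat x) := by
  unfold Mhat
  fun_prop

theorem aestronglyMeasurable_Lhat (hχ : Measurable χ) (y : ℕ) (b : ℤ) (N : ℝ) (a q : ℕ)
    (μ : MeasureTheory.Measure ℝ) :
    MeasureTheory.AEStronglyMeasurable (Lhat χ y b N a q) μ := by
  unfold Lhat
  refine Measurable.aestronglyMeasurable ?_
  fun_prop

theorem norm_Lhat_le (hχ : ∀ x, |χ x| ≤ 1) {y q a : ℕ} {b : ℤ} (ha : Nat.Coprime a q)
    (hb : IsCoprime b y) (h : hgt y q ≠ 0) {N : ℝ} (hN : (Nat.lcm y q : ℝ) ≤ N) (ξ : ℝ) :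
    ‖Lhat χ y b N a q ξ‖ ≤ 2 * (Nat.totient (hgt y q) : ℝ)⁻¹ := by
  have hlcm : (0 : ℝ) < Nat.lcm y q := by
    exact_mod_cast Nat.lcm_pos (left_pos_of_hgt_ne_zero h) (right_pos_of_hgt_ne_zero h)
  rw [Lhat, norm_mul, norm_mul, Complex.norm_real, Real.norm_eq_abs]
  calc _ ≤ (Nat.totient (hgt y q) : ℝ)⁻¹ * 2 * 1 := by
        gcongr
        · exact norm_Ups_le ha.isCoprime hb h
        · exact norm_Mhat_le_two ((one_le_div hlcm).2 hN) _
        · exact hχ _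
    _ = _ := by ring

end Lhat

section Lacunary

variable {ι : Type*}

theorem sum_rpow_neg_le_of_lacunary (s : Finset ι) (h : ι → ℝ) {c δ Q : ℝ} (hc : 1 < c)
    (hδ : 0 < δ) (hQ : 0 < Q) (hs : ∀ i ∈ s, Q ≤ h i)
    (hlac : (s : Set ι).Pairwise fun i j => h i ≤ h j → c * h i ≤ h j) :
    ∑ i ∈ s, h i ^ (-δ) ≤ Q ^ (-δ) * (1 - c ^ (-δ))⁻¹ := by
  classical
  have hc0 : 0 < c := one_pos.trans hc
  have hratio : 0 < 1 - c ^ (-δ) :=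
    sub_pos.2 (Real.rpow_lt_one_of_one_lt_of_neg hc (neg_lt_zero.2 hδ))
  induction s using Finset.induction_on_min_value h generalizing Q with
  | empty =>
    rw [Finset.sum_empty]
    positivity
  | insert i s hi hmin ih =>
    have hQi : Q ≤ h i := hs i (Finset.mem_insert_self i s)
    have hrest : ∑ j ∈ s, h j ^ (-δ) ≤ (c * Q) ^ (-δ) * (1 - c ^ (-δ))⁻¹ := by
      refine ih (by positivity) (fun j hj => ?_) (hlac.mono (by simp))
      refine (mul_le_mul_of_nonneg_left hQi hc0.le).trans
        (hlac (by simp) (by simp [hj]) (fun hij => hi (hij ▸ hj)) (hmin j hj))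
    calc ∑ j ∈ insert i s, h j ^ (-δ) = h i ^ (-δ) + ∑ j ∈ s, h j ^ (-δ) :=
          Finset.sum_insert hi
      _ ≤ Q ^ (-δ) + (c * Q) ^ (-δ) * (1 - c ^ (-δ))⁻¹ :=
          add_le_add (Real.rpow_le_rpow_of_nonpos hQ hQi (neg_nonpos.2 hδ.le)) hrest
      _ = Q ^ (-δ) * (1 - c ^ (-δ))⁻¹ := by
          rw [Real.mul_rpow hc0.le hQ.le]
          field_simp
          ring

theorem one_le_mul_abs_div_sub_div {a q a' q' : ℕ} (hq : 0 < q) (hq' : 0 < q')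
    (hne : a * q' ≠ a' * q) : 1 ≤ q * q' * |(a : ℝ) / q - a' / q'| := by
  have hint : (1 : ℤ) ≤ |(a : ℤ) * q' - a' * q| :=
    Int.one_le_abs (sub_ne_zero.2 (by exact_mod_cast hne))
  calc (1 : ℝ) ≤ |(a : ℝ) * q' - a' * q| := by exact_mod_cast hint
    _ = |q * q' * ((a : ℝ) / q - a' / q')| := by
      congr 1
      field_simp
    _ = _ := by rw [abs_mul, abs_of_pos (by positivity)]

theorem one_sub_mul_le_of_near_fractions {a q a' q' : ℕ} {κ ℓ ℓ' ξ : ℝ} (hq : 0 < q)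
    (hq' : 0 < q') (hne : a * q' ≠ a' * q) (hqℓ : (q : ℝ) ≤ ℓ) (hqℓ' : (q' : ℝ) ≤ ℓ')
    (hξ : |ℓ ^ 2 * (ξ - a / q)| ≤ κ) (hξ' : |ℓ' ^ 2 * (ξ - a' / q')| ≤ κ) (hℓ : ℓ ≤ ℓ') :
    (1 - κ) * ℓ ≤ κ * ℓ' := by
  have hℓ0 : 0 < ℓ := lt_of_lt_of_le (by exact_mod_cast hq) hqℓ
  have hℓ'0 : 0 < ℓ' := hℓ0.trans_le hℓ
  rw [abs_mul, abs_of_pos (by positivity)] at hξ hξ'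
  have hsep : 1 ≤ ℓ * ℓ' * |ξ - a / q| + ℓ * ℓ' * |ξ - a' / q'| := by
    calc (1 : ℝ) ≤ q * q' * |(a : ℝ) / q - a' / q'| := one_le_mul_abs_div_sub_div hq hq' hne
      _ ≤ ℓ * ℓ' * (|ξ - a / q| + |ξ - a' / q'|) := by
        gcongr
        rw [abs_sub_comm ξ (a / q)]
        exact abs_sub_le _ _ _
      _ = _ := mul_add _ _ _
  have hfar : ℓ * ℓ' * |ξ - a' / q'| ≤ κ := hξ'.trans' (by rw [pow_two]; gcongr)
  calc (1 - κ) * ℓ ≤ ℓ * ℓ' * |ξ - a / q| * ℓ := by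
        gcongr
        linarith
    _ = ℓ ^ 2 * |ξ - a / q| * ℓ' := by ring
    _ ≤ κ * ℓ' := by gcongr

theorem eq_of_coprime_of_mul_eq_mul {a q a' q' : ℕ} (hq : 0 < q) (h : Nat.Coprime a q)
    (h' : Nat.Coprime a' q') (he : a * q' = a' * q) : q = q' ∧ a = a' := by
  obtain rfl : q = q' := Nat.dvd_antisymm
    (h.symm.dvd_of_dvd_mul_left (he ▸ Nat.dvd_mul_left q a'))
    (h'.symm.dvd_of_dvd_mul_left (he ▸ Nat.dvd_mul_left q' a))
  exact ⟨rfl, Nat.eq_of_mul_eq_mul_right hq he⟩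

end Lacunary

section HighMultiplier

/-- The reduced fractions `a / q`, encoded as pairs `⟨q, a⟩`, at which the multiplier pieces of the
High kernel are centred. -/
def highFractions (y N : ℕ) (Q : ℝ) : Finset (Σ _ : ℕ, ℕ) :=
  ((Finset.Icc 1 (y * ⌈(N : ℝ) ^ (1 / 10 : ℝ)⌉₊)).filter
      (fun q : ℕ => Q ≤ (hgt y q : ℝ) ∧ (hgt y q : ℝ) ≤ (N : ℝ) ^ (1 / 10 : ℝ))).sigma
    fun q => (Finset.Icc 1 q).filter (fun a : ℕ => Nat.gcd a q = 1)

/-- The fractions of `highFractions` whose bump, of width of order `ℓ⁻²`, reaches `ξ`. -/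
def nearFractions (y N : ℕ) (Q ξ : ℝ) : Finset (Σ _ : ℕ, ℕ) :=
  (highFractions y N Q).filter fun p => |(Nat.lcm y p.1 : ℝ) ^ 2 * (ξ - p.2 / p.1)| ≤ 1 / 4

/-- The Fourier multiplier of the High kernel. -/
def highMultiplier (χ : ℝ → ℝ) (y : ℕ) (b : ℤ) (N : ℕ) (Q ξ : ℝ) : ℂ :=
  ∑ p ∈ highFractions y N Q, Lhat χ y b N p.2 p.1 ξ

variable {y N : ℕ} {Q : ℝ} {p p' : Σ _ : ℕ, ℕ}

theorem coprime_of_mem_highFractions (hp : p ∈ highFractions y N Q) : Nat.Coprime p.2 p.1 :=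
  (Finset.mem_filter.1 (Finset.mem_sigma.1 hp).2).2

theorem hgt_mem_Icc_of_mem_highFractions (hp : p ∈ highFractions y N Q) :
    (hgt y p.1 : ℝ) ∈ Set.Icc Q ((N : ℝ) ^ (1 / 10 : ℝ)) :=
  (Finset.mem_filter.1 (Finset.mem_sigma.1 hp).1).2

theorem hgt_ne_zero_of_mem_highFractions (hQ : 0 < Q) (hp : p ∈ highFractions y N Q) :
    hgt y p.1 ≠ 0 :=
  Nat.cast_ne_zero.1 (hQ.trans_le (hgt_mem_Icc_of_mem_highFractions hp).1).ne'

theorem lcm_le_of_mem_highFractions (hQ : 0 < Q) (hN : (y : ℝ) * (N : ℝ) ^ (1 / 10 : ℝ) ≤ N)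
    (hp : p ∈ highFractions y N Q) : (Nat.lcm y p.1 : ℝ) ≤ N := by
  rw [← mul_hgt (hgt_ne_zero_of_mem_highFractions hQ hp), Nat.cast_mul]
  refine le_trans ?_ hN
  gcongr
  exact (hgt_mem_Icc_of_mem_highFractions hp).2

theorem three_mul_hgt_le_of_mem_nearFractions {ξ : ℝ} (hQ : 0 < Q) (hp : p ∈ nearFractions y N Q ξ)
    (hp' : p' ∈ nearFractions y N Q ξ) (hne : p ≠ p') (hle : (hgt y p.1 : ℝ) ≤ hgt y p'.1) :
    3 * (hgt y p.1 : ℝ) ≤ hgt y p'.1 := by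
  obtain ⟨hp, hξ⟩ := Finset.mem_filter.1 hp
  obtain ⟨hp', hξ'⟩ := Finset.mem_filter.1 hp'
  have hh := hgt_ne_zero_of_mem_highFractions hQ hp
  have hh' := hgt_ne_zero_of_mem_highFractions hQ hp'
  have hy : (0 : ℝ) < y := by exact_mod_cast left_pos_of_hgt_ne_zero hh
  have hle_lcm {q : ℕ} (h : hgt y q ≠ 0) : (q : ℝ) ≤ Nat.lcm y q := by
    exact_mod_cast Nat.le_of_dvd
      (Nat.lcm_pos (left_pos_of_hgt_ne_zero h) (right_pos_of_hgt_ne_zero h)) (Nat.dvd_lcm_right y q)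
  have hdistinct : p.2 * p'.1 ≠ p'.2 * p.1 := by
    intro he
    obtain ⟨hq, ha⟩ := eq_of_coprime_of_mul_eq_mul (right_pos_of_hgt_ne_zero hh)
      (coprime_of_mem_highFractions hp) (coprime_of_mem_highFractions hp') he
    exact hne (Sigma.ext hq (heq_of_eq ha))
  have hlcm {q : ℕ} (h : hgt y q ≠ 0) : (Nat.lcm y q : ℝ) = y * hgt y q := by
    exact_mod_cast (mul_hgt h).symm
  have hsep := one_sub_mul_le_of_near_fractions (right_pos_of_hgt_ne_zero hh)
    (right_pos_of_hgt_ne_zero hh') hdistinct (hle_lcm hh) (hle_lcm hh') hξ hξ'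
    (by rw [hlcm hh, hlcm hh']; gcongr)
  rw [hlcm hh, hlcm hh'] at hsep
  refine le_of_mul_le_mul_left ?_ hy
  linarith

theorem sum_hgt_rpow_neg_nearFractions_le {δ : ℝ} (hδ : 0 < δ) (hQ : 0 < Q) (ξ : ℝ) :
    ∑ p ∈ nearFractions y N Q ξ, (hgt y p.1 : ℝ) ^ (-δ) ≤ Q ^ (-δ) * (1 - 3 ^ (-δ))⁻¹ := by
  refine sum_rpow_neg_le_of_lacunary (c := 3) (nearFractions y N Q ξ) (fun p => (hgt y p.1 : ℝ))
    (by norm_num) hδ hQ ?_ ?_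
  · intro p hp
    exact (hgt_mem_Icc_of_mem_highFractions (Finset.mem_filter.1 hp).1).1
  · intro p hp p' hp' hne hle
    exact three_mul_hgt_le_of_mem_nearFractions hQ hp hp' hne hle

variable {χ : ℝ → ℝ} {b : ℤ}

theorem highMultiplier_eq_sum_nearFractions
    (hχ0 : ∀ x, x ∉ Set.Icc (-(1 / 4) : ℝ) (1 / 4) → χ x = 0) (ξ : ℝ) :
    highMultiplier χ y b N Q ξ = ∑ p ∈ nearFractions y N Q ξ, Lhat χ y b N p.2 p.1 ξ := by
  refine (Finset.sum_subset (Finset.filter_subset _ _) fun p hp hfar => ?_).symm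
  rw [Lhat, hχ0 _ fun hnear => hfar (Finset.mem_filter.2 ⟨hp, abs_le.2 hnear⟩), Complex.ofReal_zero,
    mul_zero]

theorem exists_norm_highMultiplier_le {ε : ℝ} (hε : 0 < ε) (hε1 : ε < 1) :
    ∃ C : ℝ, 0 < C ∧ ∀ χ : ℝ → ℝ, (∀ x, |χ x| ≤ 1) →
      (∀ x, x ∉ Set.Icc (-(1 / 4) : ℝ) (1 / 4) → χ x = 0) →
      ∀ y N : ℕ, (y : ℝ) * (N : ℝ) ^ (1 / 10 : ℝ) ≤ N → ∀ b : ℤ, IsCoprime b y →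
      ∀ Q : ℝ, 0 < Q → ∀ ξ : ℝ, ‖highMultiplier χ y b N Q ξ‖ ≤ C * Q ^ (-1 + ε) := by
  obtain ⟨C, hC, htotient⟩ := exists_inv_totient_le_mul_rpow hε
  have hδ : 0 < 1 - ε := sub_pos.2 hε1
  have hratio : 0 < 1 - (3 : ℝ) ^ (-(1 - ε)) :=
    sub_pos.2 (Real.rpow_lt_one_of_one_lt_of_neg (by norm_num) (neg_lt_zero.2 hδ))
  refine ⟨2 * C * (1 - 3 ^ (-(1 - ε)))⁻¹, by positivity, ?_⟩
  intro χ hχ hχ0 y N hN b hb Q hQ ξ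
  have hterm : ∀ p ∈ nearFractions y N Q ξ,
      ‖Lhat χ y b N p.2 p.1 ξ‖ ≤ 2 * C * (hgt y p.1 : ℝ) ^ (-(1 - ε)) := by
    intro p hp
    replace hp := (Finset.mem_filter.1 hp).1
    have hh := hgt_ne_zero_of_mem_highFractions hQ hp
    calc ‖Lhat χ y b N p.2 p.1 ξ‖ ≤ 2 * (Nat.totient (hgt y p.1) : ℝ)⁻¹ :=
          norm_Lhat_le hχ (coprime_of_mem_highFractions hp) hb hh
            (lcm_le_of_mem_highFractions hQ hN hp) ξ
      _ ≤ 2 * (C * (hgt y p.1 : ℝ) ^ (-(1 - ε))) := by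
          gcongr
          exact htotient _ (Nat.pos_of_ne_zero hh)
      _ = 2 * C * (hgt y p.1 : ℝ) ^ (-(1 - ε)) := (mul_assoc _ _ _).symm
  calc ‖highMultiplier χ y b N Q ξ‖
      ≤ ∑ p ∈ nearFractions y N Q ξ, 2 * C * (hgt y p.1 : ℝ) ^ (-(1 - ε)) := by
        rw [highMultiplier_eq_sum_nearFractions hχ0]
        exact norm_sum_le_of_le _ hterm
    _ ≤ 2 * C * (Q ^ (-(1 - ε)) * (1 - 3 ^ (-(1 - ε)))⁻¹) := by
        rw [← Finset.mul_sum]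
        gcongr
        exact sum_hgt_rpow_neg_nearFractions_le hδ hQ ξ
    _ = 2 * C * (1 - 3 ^ (-(1 - ε)))⁻¹ * Q ^ (-1 + ε) := by
        rw [neg_sub', sub_neg_eq_add]
        ring

end HighMultiplier

section Fourier

open MeasureTheory

/-- The kernel on `ℤ` of the Fourier multiplier `m` on `ℝ / ℤ`, the latter being represented by its
fundamental domain `(0, 1]`. -/
def fourierKernel (m : ℝ → ℂ) (x : ℤ) : ℂ :=
  ∫ ξ in (0 : ℝ)..1, m ξ * e2pi ((x : ℝ) * ξ)

/-- The Fourier transform of the restriction of `f` to the finite set `F`. -/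
def trigPoly (F : Finset ℤ) (f : ℤ → ℂ) (ξ : ℝ) : ℂ :=
  ∑ z ∈ F, f z * e2pi (-((z : ℝ) * ξ))

variable {m : ℝ → ℂ} (F : Finset ℤ) (f : ℤ → ℂ)

theorem fourierKernel_sum {ι : Type*} {s : Finset ι} {m : ι → ℝ → ℂ}
    (hm : ∀ i ∈ s, IntervalIntegrable (m i) volume 0 1) (x : ℤ) :
    fourierKernel (fun ξ => ∑ i ∈ s, m i ξ) x = ∑ i ∈ s, fourierKernel (m i) x := by
  simp only [fourierKernel, Finset.sum_mul]
  exact intervalIntegral.integral_finsetSum fun i hi =>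
    (hm i hi).mul_continuousOn (by fun_prop)

theorem hasSum_sq_norm_fourierKernel (hm : MemLp m 2 (volume.restrict (Set.Ioc 0 1))) :
    HasSum (fun x : ℤ => ‖fourierKernel m x‖ ^ 2) (∫ ξ in (0 : ℝ)..1, ‖m ξ‖ ^ 2) := by
  have hParseval := hasSum_sq_fourierCoeffOn zero_lt_one hm
  rw [sub_zero, inv_one, one_smul, ← (Equiv.neg ℤ).hasSum_iff] at hParseval
  refine hParseval.congr_fun fun x => ?_
  simp only [Function.comp_apply, Equiv.neg_apply, fourierCoeffOn_eq_integral, sub_zero, div_one,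
    one_smul, neg_neg, smul_eq_mul, fourierKernel]
  congr 2
  refine intervalIntegral.integral_congr fun ξ _ => ?_
  rw [fourier_coe_apply, mul_comm, e2pi]
  push_cast
  ring_nf

theorem sum_mul_fourierKernel_sub (hm : IntervalIntegrable m volume 0 1) (x : ℤ) :
    ∑ z ∈ F, f z * fourierKernel m (x - z) = fourierKernel (fun ξ => m ξ * trigPoly F f ξ) x := by
  simp only [trigPoly, Finset.mul_sum]
  rw [fourierKernel_sum fun z _ => hm.mul_continuousOn (by fun_prop)]
  refine Finset.sum_congr rfl fun z _ => ?_
  rw [fourierKernel, ← intervalIntegral.integral_const_mul]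
  refine intervalIntegral.integral_congr fun ξ _ => ?_
  have hshift : e2pi (((x - z : ℤ) : ℝ) * ξ) = e2pi (-((z : ℝ) * ξ)) * e2pi (x * ξ) := by
    rw [← e2pi_add]
    push_cast
    ring_nf
  simp only [hshift]
  ring

theorem fourierKernel_one (n : ℤ) : fourierKernel (fun _ => 1) n = if n = 0 then 1 else 0 := by
  split_ifs with hn
  · simp [fourierKernel, hn, e2pi]
  · have hfreq : 2 * Real.pi * Complex.I * n ≠ 0 := by simp [Real.pi_ne_zero, hn]
    have hexp (ξ : ℝ) : 1 * e2pi ((n : ℝ) * ξ) = Complex.exp (2 * Real.pi * Complex.I * n * ξ) := by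
      rw [e2pi]
      push_cast
      ring_nf
    have hperiod : Complex.exp (2 * Real.pi * Complex.I * n) = 1 :=
      Complex.exp_eq_one_iff.2 ⟨n, by ring⟩
    simp only [fourierKernel, hexp, integral_exp_mul_complex hfreq]
    simp [hperiod]

theorem fourierKernel_trigPoly (x : ℤ) :
    fourierKernel (trigPoly F f) x = if x ∈ F then f x else 0 := by
  have hone := sum_mul_fourierKernel_sub (m := fun _ => 1) F f (by simp) x
  simpa only [fourierKernel_one, sub_eq_zero, mul_ite, mul_one, mul_zero, Finset.sum_ite_eq,
    one_mul] using hone.symm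

theorem norm_trigPoly_le (ξ : ℝ) : ‖trigPoly F f ξ‖ ≤ ∑ z ∈ F, ‖f z‖ :=
  norm_sum_le_of_le _ fun z _ => by rw [norm_mul, norm_e2pi, mul_one]

@[fun_prop]
theorem continuous_trigPoly : Continuous (trigPoly F f) := by
  unfold trigPoly
  fun_prop

theorem integral_sq_norm_trigPoly :
    ∫ ξ in (0 : ℝ)..1, ‖trigPoly F f ξ‖ ^ 2 = ∑ z ∈ F, ‖f z‖ ^ 2 := by
  have hL2 : MemLp (trigPoly F f) 2 (volume.restrict (Set.Ioc 0 1)) :=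
    MemLp.of_bound (by fun_prop) _ (ae_of_all _ (norm_trigPoly_le F f))
  have hcoeff : ∀ x ∉ F, ‖fourierKernel (trigPoly F f) x‖ ^ 2 = 0 := fun x hx => by
    simp [fourierKernel_trigPoly, hx]
  rw [← (hasSum_sq_norm_fourierKernel hL2).tsum_eq, tsum_eq_sum hcoeff]
  exact Finset.sum_congr rfl fun x hx => by rw [fourierKernel_trigPoly, if_pos hx]

theorem integral_sq_norm_mul_trigPoly_le {M : ℝ} (hM : ∀ ξ, ‖m ξ‖ ≤ M) :
    ∫ ξ in (0 : ℝ)..1, ‖m ξ * trigPoly F f ξ‖ ^ 2 ≤ M ^ 2 * ∑ z ∈ F, ‖f z‖ ^ 2 := by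
  rw [← integral_sq_norm_trigPoly, ← intervalIntegral.integral_const_mul,
    intervalIntegral.integral_of_le zero_le_one, intervalIntegral.integral_of_le zero_le_one]
  refine integral_mono_of_nonneg (ae_of_all _ fun _ => by positivity)
    (Continuous.integrableOn_Ioc (by fun_prop)) (ae_of_all _ fun ξ => ?_)
  simp only [norm_mul, mul_pow]
  gcongr
  exact hM ξ

theorem l2_norm_sum_mul_fourierKernel_sub_le
    (hm : AEStronglyMeasurable m (volume.restrict (Set.Ioc 0 1))) {M : ℝ} (hM : ∀ ξ, ‖m ξ‖ ≤ M) :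
    (∑' x : ℤ, (‖∑ z ∈ F, f z * fourierKernel m (x - z)‖₊ : ℝ≥0∞) ^ (2 : ℝ)) ^ (1 / 2 : ℝ) ≤
      ENNReal.ofReal (M * (∑ z ∈ F, ‖f z‖ ^ 2) ^ (1 / 2 : ℝ)) := by
  have hM0 : 0 ≤ M := (norm_nonneg _).trans (hM 0)
  have hint : IntervalIntegrable m volume 0 1 :=
    (intervalIntegrable_iff_integrableOn_Ioc_of_le zero_le_one).2
      (Integrable.of_bound hm M (ae_of_all _ hM))
  have hL2 : MemLp (fun ξ => m ξ * trigPoly F f ξ) 2 (volume.restrict (Set.Ioc 0 1)) := by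
    refine MemLp.of_bound (hm.mul (by fun_prop)) (M * ∑ z ∈ F, ‖f z‖) (ae_of_all _ fun ξ => ?_)
    rw [norm_mul]
    gcongr
    exacts [hM ξ, norm_trigPoly_le F f ξ]
  have hPlancherel := hasSum_sq_norm_fourierKernel hL2
  have hofReal (w : ℂ) : (‖w‖₊ : ℝ≥0∞) ^ (2 : ℝ) = ENNReal.ofReal (‖w‖ ^ 2) := by
    rw [ENNReal.ofReal_pow (norm_nonneg _), ofReal_norm, ENNReal.rpow_ofNat, enorm_eq_nnnorm]
  simp only [sum_mul_fourierKernel_sub F f hint, hofReal]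
  rw [← ENNReal.ofReal_tsum_of_nonneg (fun _ => by positivity) hPlancherel.summable,
    hPlancherel.tsum_eq]
  calc _ ≤ ENNReal.ofReal (M ^ 2 * ∑ z ∈ F, ‖f z‖ ^ 2) ^ (1 / 2 : ℝ) := by
        gcongr
        exact integral_sq_norm_mul_trigPoly_le F f hM
    _ = _ := by
      rw [ENNReal.ofReal_rpow_of_nonneg (by positivity) (by norm_num),
        Real.mul_rpow (by positivity) (by positivity), ← Real.sqrt_eq_rpow (M ^ 2),
        Real.sqrt_sq hM0]

end Fourier

section HighKernel

open MeasureTheory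

variable {χ : ℝ → ℝ}

theorem intervalIntegrable_Lhat (hχm : Measurable χ) (hχ : ∀ x, |χ x| ≤ 1) (y : ℕ) (b : ℤ) (N : ℝ)
    (a q : ℕ) (s t : ℝ) : IntervalIntegrable (Lhat χ y b N a q) volume s t := by
  unfold Lhat
  refine IntervalIntegrable.continuousOn_mul ?_ (by fun_prop)
  refine (intervalIntegrable_const (c := (1 : ℝ))).mono_fun
    (Measurable.aestronglyMeasurable (by fun_prop)) (ae_of_all _ fun ξ => ?_)
  simpa using hχ _

theorem HiK_eq_fourierKernel (hχm : Measurable χ) (hχ : ∀ x, |χ x| ≤ 1) (y : ℕ) (b : ℤ) (N : ℕ)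
    (Q : ℝ) (x : ℤ) : HiK χ y b N Q x = fourierKernel (highMultiplier χ y b N Q) x := by
  unfold highMultiplier
  rw [fourierKernel_sum fun p _ => intervalIntegrable_Lhat hχm hχ y b N p.2 p.1 0 1]
  exact Finset.sum_sigma' _ _ _

theorem mul_rpow_tenth_le {y N : ℕ} (hN : 1 ≤ N) (hyN : y ^ 2 ≤ N) :
    (y : ℝ) * (N : ℝ) ^ (1 / 10 : ℝ) ≤ N := by
  have hN1 : (1 : ℝ) ≤ N := by exact_mod_cast hN
  have hy : (y : ℝ) ≤ (N : ℝ) ^ (1 / 2 : ℝ) := by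
    rw [← Real.sqrt_eq_rpow]
    exact Real.le_sqrt_of_sq_le (by exact_mod_cast hyN)
  calc (y : ℝ) * (N : ℝ) ^ (1 / 10 : ℝ)
      ≤ (N : ℝ) ^ (1 / 2 : ℝ) * (N : ℝ) ^ (1 / 10 : ℝ) := by gcongr
    _ = (N : ℝ) ^ (1 / 2 + 1 / 10 : ℝ) := (Real.rpow_add (one_pos.trans_le hN1) _ _).symm
    _ ≤ (N : ℝ) ^ (1 : ℝ) := Real.rpow_le_rpow_of_exponent_le hN1 (by norm_num)
    _ = N := Real.rpow_one _

theorem high_term_fixed_scale_general {ε : ℝ} (hε : 0 < ε) :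
    ∃ C : ℝ, 0 < C ∧ ∀ χ : ℝ → ℝ, Measurable χ → (∀ x, |χ x| ≤ 1) →
      (∀ x, x ∉ Set.Icc (-(1 / 4) : ℝ) (1 / 4) → χ x = 0) →
      ∀ y N : ℕ, 1 ≤ y → y ^ 2 ≤ N → ∀ b : ℤ, IsCoprime b y → ∀ Q : ℝ, 1 ≤ Q →
      ∀ (F : Finset ℤ) (f : ℤ → ℂ),
        (∑' x : ℤ, (‖∑ z ∈ F, f z * HiK χ y b N Q (x - z)‖₊ : ℝ≥0∞) ^ (2 : ℝ)) ^ (1 / 2 : ℝ) ≤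
          ENNReal.ofReal (C * Q ^ (-1 + ε) * (∑ z ∈ F, ‖f z‖ ^ 2) ^ (1 / 2 : ℝ)) := by
  obtain ⟨C, hC, hsup⟩ := exists_norm_highMultiplier_le (ε := min ε (1 / 2)) (by positivity)
    ((min_le_right _ _).trans_lt (by norm_num))
  refine ⟨C, hC, fun χ hχm hχ hχ0 y N hy hyN b hb Q hQ F f => ?_⟩
  simp only [HiK_eq_fourierKernel hχm hχ]
  refine l2_norm_sum_mul_fourierKernel_sub_le F f ?_ fun ξ => ?_
  · exact Finset.aestronglyMeasurable_fun_sum _ fun p _ =>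
      aestronglyMeasurable_Lhat hχm y b N p.2 p.1 _
  · calc ‖highMultiplier χ y b N Q ξ‖ ≤ C * Q ^ (-1 + min ε (1 / 2)) :=
          hsup χ hχ hχ0 y N (mul_rpow_tenth_le ((Nat.one_le_pow 2 y hy).trans hyN) hyN) b hb Q
            (one_pos.trans_le hQ) ξ
      _ ≤ C * Q ^ (-1 + ε) := by
          gcongr
          exact min_le_left _ _

end HighKernel

theorem high_term_fixed_scale (χ : ℝ → ℝ) (hχs : ContDiff ℝ (⊤ : ℕ∞) χ)
    (hχr : ∀ x : ℝ, χ x ∈ Set.Icc (0 : ℝ) 1)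
    (hχ1 : ∀ x ∈ Set.Icc (-(1/16) : ℝ) (1/16), χ x = 1)
    (hχ0 : ∀ x : ℝ, x ∉ Set.Icc (-(1/4) : ℝ) (1/4) → χ x = 0) :
    ∀ ε : ℝ, 0 < ε →
      ∃ C : ℝ, 0 < C ∧
        ∀ y : ℕ, 1 ≤ y →
          ∃ N0 : ℕ,
            ∀ N : ℕ, N0 < N → ∀ b : ℤ, Int.gcd b y = 1 →
              ∀ Q : ℝ, 1 ≤ Q → Q ≤ (N : ℝ) ^ ((1:ℝ)/10) →
                ∀ F : Finset ℤ, (∀ x ∈ F, x ∈ Set.Icc (0 : ℤ) (N : ℤ)) →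
                  (∑' x : ℤ, (‖HiConv χ y b N Q F x‖₊ : ℝ≥0∞) ^ (2:ℝ)) ^ ((1:ℝ)/2) ≤
                    ENNReal.ofReal (C * Q ^ (-1 + ε) * (F.card : ℝ) ^ ((1:ℝ)/2)) := by
  intro ε hε
  obtain ⟨C, hC, hbound⟩ := high_term_fixed_scale_general hε
  refine ⟨C, hC, fun y hy => ⟨y ^ 2, fun N hN b hb Q hQ _ F _ => ?_⟩⟩
  simpa [HiConv] using hbound χ hχs.continuous.measurable
    (fun x => abs_le.2 ⟨by linarith [(hχr x).1], (hχr x).2⟩) hχ0 y N hy hN.le b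
    (Int.isCoprime_iff_gcd_eq_one.2 hb) Q hQ F 1

end
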